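/- Suppose ẑ ∈ ℂ_1^n satisfies ẑ = F_1(ẑ), and set ŝ = (z*)ᴴ ẑ. For any real t > 0 with t ≥ 4σ‖W‖, let z ∈ ℂ_{≤1}^n be the fixed point of G(·, ŝ, t). Then ‖ẑ − z‖² ≤ 32·Σ_{j=1}^n 1{|z*_j ŝ + σ[Wz]_j| < t}. -/

import Mathlib

open scoped Classical
open Matrix

noncomputable section

namespace PhaseSync

/-- Euclidean norm of a complex vector. -/
def enorm {k : ℕ} (v : Fin k → ℂ) : ℝ := Real.sqrt (∑ i, ‖v i‖ ^ 2)

/-- Frobenius norm of a complex matrix. -/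
def fnorm {k l : ℕ} (A : Matrix (Fin k) (Fin l) ℂ) : ℝ :=
  Real.sqrt (∑ i, ∑ j, ‖A i j‖ ^ 2)

/-- L2 operator norm of a square complex matrix. -/
def opNorm {k : ℕ} (A : Matrix (Fin k) (Fin k) ℂ) : ℝ :=
  ‖Matrix.toEuclideanCLM (𝕜 := ℂ) (n := Fin k) A‖

/-- Indicator function of a proposition. -/
def ind (P : Prop) : ℝ := if P then 1 else 0

/-- The loss ℓ_m(V, z) = min_{a : ‖a‖=1} ‖V - a zᴴ‖_F² / n. -/
def lossM {k l : ℕ} (V : Matrix (Fin k) (Fin l) ℂ) (z : Fin l → ℂ) : ℝ :=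
  sInf { r : ℝ | ∃ a : Fin k → ℂ, enorm a = 1 ∧
    r = fnorm (V - Matrix.vecMulVec a (star z)) ^ 2 / l }

/-- The loss ℓ_1(z', z) = min_{|a|=1} ‖z' - a z‖² / n. -/
def loss1 {l : ℕ} (z' z : Fin l → ℂ) : ℝ :=
  sInf { r : ℝ | ∃ a : ℂ, ‖a‖ = 1 ∧ r = enorm (z' - a • z) ^ 2 / l }

/-- The mapping F₁: entrywise normalization of Y z. -/
def F1 {l : ℕ} (Y : Matrix (Fin l) (Fin l) ℂ) (z : Fin l → ℂ) : Fin l → ℂ :=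
  fun j => if Y.mulVec z j ≠ 0 then Y.mulVec z j / (‖Y.mulVec z j‖ : ℂ) else z j

/-- jth column of a matrix. -/
def col {k l : ℕ} (A : Matrix (Fin k) (Fin l) ℂ) (j : Fin l) : Fin k → ℂ := fun i => A i j

/-- The mapping F_m: columnwise normalization of V Yᴴ. -/
def Fm {k l : ℕ} (Y : Matrix (Fin l) (Fin l) ℂ) (V : Matrix (Fin k) (Fin l) ℂ) :
    Matrix (Fin k) (Fin l) ℂ :=
  Matrix.of fun i j =>
    if col (V * Yᴴ) j ≠ 0 then (V * Yᴴ) i j / ((enorm (col (V * Yᴴ) j) : ℝ) : ℂ) else V i j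

/-- g_t(x) = x / max(|x|, t). -/
def gfun (t : ℝ) (x : ℂ) : ℂ := x / ((max ‖x‖ t : ℝ) : ℂ)

/-- The mapping G(z, s, t), coordinatewise g_t(z*_j s + σ [W z]_j). -/
def G {l : ℕ} (zstar : Fin l → ℂ) (σ : ℝ) (W : Matrix (Fin l) (Fin l) ℂ)
    (z : Fin l → ℂ) (s : ℂ) (t : ℝ) : Fin l → ℂ :=
  fun j => gfun t (zstar j * s + (σ : ℂ) * W.mulVec z j)

/-- The mapping F₁'(z, s), entrywise normalization of z* s + σ W z. -/
def F1' {l : ℕ} (zstar : Fin l → ℂ) (σ : ℝ) (W : Matrix (Fin l) (Fin l) ℂ)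
    (z : Fin l → ℂ) (s : ℂ) : Fin l → ℂ :=
  fun j =>
    if zstar j * s + (σ : ℂ) * W.mulVec z j ≠ 0 then
      (zstar j * s + (σ : ℂ) * W.mulVec z j) /
        ((‖zstar j * s + (σ : ℂ) * W.mulVec z j‖ : ℝ) : ℂ)
    else z j

/-- W with jth row and column zeroed out. -/
def Wminus {l : ℕ} (W : Matrix (Fin l) (Fin l) ℂ) (j : Fin l) : Matrix (Fin l) (Fin l) ℂ :=
  Matrix.of fun k i => if k = j ∨ i = j then 0 else W k i

/-!
Put `b = z* ŝ + σ W z` and `a = Y ẑ = z* ŝ + σ W ẑ`, so that `a - b = σ W (ẑ - z)`. Where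
`|b_j| ≥ t`, `ẑ_j` and `z_j` are the directions of `a_j` and `b_j`, and normalization is
`2 / t`-Lipschitz at `b_j`, so `t |ẑ_j - z_j| ≤ 2 |a_j - b_j|`; elsewhere `|ẑ_j - z_j| ≤ 2`.
Summing squares gives `(t² - 4 σ² ‖W‖²) ‖ẑ - z‖² ≤ 4 t² #{j : |b_j| < t}`, and `4 σ ‖W‖ ≤ t`
makes the left-hand factor at least `3 t² / 4`.
-/

section Normalization

lemma norm_mul_norm_sub_le_of_norm_smul_eq {E : Type*} [NormedAddCommGroup E] [NormedSpace ℝ E]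
    {a b u v : E} (hu : ‖u‖ ≤ 1) (ha : ‖a‖ • u = a) (hb : ‖b‖ • v = b) :
    ‖b‖ * ‖u - v‖ ≤ 2 * ‖a - b‖ := by
  have decomposition : ‖b‖ • (u - v) = (‖b‖ - ‖a‖) • u + (a - b) := by
    rw [smul_sub, sub_smul, ha, hb]
    abel
  have radial : ‖(‖b‖ - ‖a‖) • u‖ ≤ ‖a - b‖ := by
    calc ‖(‖b‖ - ‖a‖) • u‖ = |‖b‖ - ‖a‖| * ‖u‖ := by rw [norm_smul, Real.norm_eq_abs]
      _ ≤ |‖b‖ - ‖a‖| := mul_le_of_le_one_right (abs_nonneg _) hu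
      _ ≤ ‖a - b‖ := norm_sub_rev a b ▸ abs_norm_sub_norm_le b a
  calc ‖b‖ * ‖u - v‖ = ‖(‖b‖ - ‖a‖) • u + (a - b)‖ := by
        rw [← decomposition, norm_smul, norm_norm]
    _ ≤ ‖(‖b‖ - ‖a‖) • u‖ + ‖a - b‖ := norm_add_le _ _
    _ ≤ 2 * ‖a - b‖ := by linarith

lemma norm_smul_div_norm (x : ℂ) : ‖x‖ • (x / (‖x‖ : ℂ)) = x := by
  rw [Complex.real_smul]
  exact mul_div_cancel_of_imp' fun h => by simpa using h

lemma norm_mulVec_smul_of_eq_F1 {n : ℕ} {Y : Matrix (Fin n) (Fin n) ℂ} {z : Fin n → ℂ}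
    (hz : z = F1 Y z) (j : Fin n) : ‖(Y *ᵥ z) j‖ • z j = (Y *ᵥ z) j := by
  by_cases h : (Y *ᵥ z) j = 0
  · simp [h]
  · have hzj : z j = (Y *ᵥ z) j / (‖(Y *ᵥ z) j‖ : ℂ) := by
      simpa only [F1, if_pos h] using congrFun hz j
    exact (congrArg _ hzj).trans (norm_smul_div_norm _)

lemma norm_gfun_le_one (t : ℝ) (x : ℂ) : ‖gfun t x‖ ≤ 1 := by
  have hmax : ‖x‖ ≤ max ‖x‖ t := le_max_left _ _
  rw [gfun, norm_div, Complex.norm_real, Real.norm_of_nonneg ((norm_nonneg x).trans hmax)]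
  exact div_le_one_of_le₀ hmax ((norm_nonneg x).trans hmax)

lemma norm_smul_gfun_of_le {t : ℝ} {x : ℂ} (h : t ≤ ‖x‖) : ‖x‖ • gfun t x = x := by
  rw [gfun, max_eq_left h, norm_smul_div_norm]

lemma ind_nonneg (P : Prop) : 0 ≤ ind P := by
  unfold ind
  split_ifs <;> norm_num

lemma sq_mul_norm_sub_gfun_sq_le {t : ℝ} (ht : 0 ≤ t) {a b u : ℂ} (hu : ‖u‖ ≤ 1)
    (ha : ‖a‖ • u = a) :
    t ^ 2 * ‖u - gfun t b‖ ^ 2 ≤ 4 * t ^ 2 * ind (‖b‖ < t) + 4 * ‖a - b‖ ^ 2 := by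
  rcases lt_or_ge ‖b‖ t with hlt | hge
  · have hdiff : ‖u - gfun t b‖ ≤ 2 := by
      linarith [norm_sub_le u (gfun t b), norm_gfun_le_one t b]
    calc t ^ 2 * ‖u - gfun t b‖ ^ 2 ≤ t ^ 2 * 2 ^ 2 := by gcongr
      _ ≤ 4 * t ^ 2 * ind (‖b‖ < t) + 4 * ‖a - b‖ ^ 2 := by
        rw [ind, if_pos hlt]
        linarith [sq_nonneg ‖a - b‖]
  · have hdiff : t * ‖u - gfun t b‖ ≤ 2 * ‖a - b‖ :=
      (mul_le_mul_of_nonneg_right hge (norm_nonneg _)).trans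
        (norm_mul_norm_sub_le_of_norm_smul_eq hu ha (norm_smul_gfun_of_le hge))
    calc t ^ 2 * ‖u - gfun t b‖ ^ 2 = (t * ‖u - gfun t b‖) ^ 2 := by ring
      _ ≤ (2 * ‖a - b‖) ^ 2 := by gcongr
      _ = 4 * t ^ 2 * ind (‖b‖ < t) + 4 * ‖a - b‖ ^ 2 := by
        rw [ind, if_neg hge.not_gt]
        ring

end Normalization

section EuclideanNorm

variable {n : ℕ}

lemma enorm_sq (v : Fin n → ℂ) : enorm v ^ 2 = ∑ i, ‖v i‖ ^ 2 :=
  Real.sq_sqrt (Finset.sum_nonneg fun _ _ => sq_nonneg _)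

lemma enorm_nonneg (v : Fin n → ℂ) : 0 ≤ enorm v := Real.sqrt_nonneg _

lemma enorm_eq_norm_toLp (v : Fin n → ℂ) : enorm v = ‖WithLp.toLp 2 v‖ :=
  (EuclideanSpace.norm_eq _).symm

lemma enorm_mulVec_le (A : Matrix (Fin n) (Fin n) ℂ) (v : Fin n → ℂ) :
    enorm (A *ᵥ v) ≤ opNorm A * enorm v := by
  rw [enorm_eq_norm_toLp, enorm_eq_norm_toLp, ← Matrix.toEuclideanCLM_toLp]
  exact ContinuousLinearMap.le_opNorm _ _

lemma opNorm_smul (c : ℂ) (A : Matrix (Fin n) (Fin n) ℂ) : opNorm (c • A) = ‖c‖ * opNorm A := by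
  rw [opNorm, map_smul, norm_smul, opNorm]

end EuclideanNorm

section FixedPoints

variable {n : ℕ} {c x y : Fin n → ℂ} {A : Matrix (Fin n) (Fin n) ℂ} {t : ℝ}

lemma sq_mul_enorm_sub_sq_le (ht : 0 ≤ t) (hx : ∀ j, ‖x j‖ ≤ 1)
    (hx_dir : ∀ j, ‖(c + A *ᵥ x) j‖ • x j = (c + A *ᵥ x) j)
    (hy : ∀ j, y j = gfun t ((c + A *ᵥ y) j)) :
    t ^ 2 * enorm (x - y) ^ 2 ≤
      4 * t ^ 2 * ∑ j, ind (‖(c + A *ᵥ y) j‖ < t) + 4 * enorm (A *ᵥ (x - y)) ^ 2 := by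
  have hsub (j : Fin n) : (A *ᵥ (x - y)) j = (c + A *ᵥ x) j - (c + A *ᵥ y) j := by
    rw [mulVec_sub, ← Pi.sub_apply, add_sub_add_left_eq_sub]
  simp only [enorm_sq, Finset.mul_sum, ← Finset.sum_add_distrib]
  refine Finset.sum_le_sum fun j _ => ?_
  rw [Pi.sub_apply, hsub, hy j]
  exact sq_mul_norm_sub_gfun_sq_le ht (hx j) (hx_dir j)

lemma enorm_sub_sq_le_of_four_mul_opNorm_le (ht : 0 < t) (hA : 4 * opNorm A ≤ t)
    (hx : ∀ j, ‖x j‖ ≤ 1)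
    (hx_dir : ∀ j, ‖(c + A *ᵥ x) j‖ • x j = (c + A *ᵥ x) j)
    (hy : ∀ j, y j = gfun t ((c + A *ᵥ y) j)) :
    enorm (x - y) ^ 2 ≤ 16 / 3 * ∑ j, ind (‖(c + A *ᵥ y) j‖ < t) := by
  have hA_sub : 4 * enorm (A *ᵥ (x - y)) ≤ t * enorm (x - y) := by
    linarith [enorm_mulVec_le A (x - y), mul_le_mul_of_nonneg_right hA (enorm_nonneg (x - y))]
  have hA_sub_sq : 16 * enorm (A *ᵥ (x - y)) ^ 2 ≤ t ^ 2 * enorm (x - y) ^ 2 := by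
    linarith [pow_le_pow_left₀ (mul_nonneg zero_le_four (enorm_nonneg _)) hA_sub 2,
      mul_pow t (enorm (x - y)) 2, mul_pow 4 (enorm (A *ᵥ (x - y))) 2]
  refine le_of_mul_le_mul_left ?_ (pow_pos ht 2)
  linarith [sq_mul_enorm_sub_sq_le ht.le hx hx_dir hy]

end FixedPoints

theorem stmt17_general {n : ℕ} (zstar : Fin n → ℂ) (σ : ℝ) (W Y : Matrix (Fin n) (Fin n) ℂ)
    (hY : Y = vecMulVec zstar (star zstar) + (σ : ℂ) • W)
    (zhat : Fin n → ℂ) (hzhat_norm : ∀ j, ‖zhat j‖ ≤ 1) (hzhat : zhat = F1 Y zhat)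
    (t : ℝ) (ht : 0 < t) (hσW : 4 * |σ| * opNorm W ≤ t)
    (z : Fin n → ℂ) (hz : z = G zstar σ W z (star zstar ⬝ᵥ zhat) t) :
    enorm (zhat - z) ^ 2 ≤
      16 / 3 * ∑ j, ind (‖zstar j * (star zstar ⬝ᵥ zhat) + (σ : ℂ) * (W *ᵥ z) j‖ < t) := by
  have hfield (j : Fin n) : ((star zstar ⬝ᵥ zhat) • zstar + ((σ : ℂ) • W) *ᵥ z) j =
      zstar j * (star zstar ⬝ᵥ zhat) + (σ : ℂ) * (W *ᵥ z) j := by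
    simp [smul_mulVec, mul_comm]
  have hopNorm : 4 * opNorm ((σ : ℂ) • W) ≤ t := by
    rwa [opNorm_smul, Complex.norm_real, Real.norm_eq_abs, ← mul_assoc]
  have hzhat_dir := norm_mulVec_smul_of_eq_F1 hzhat
  rw [hY, add_mulVec, vecMulVec_mulVec, op_smul_eq_smul] at hzhat_dir
  simp only [← hfield]
  refine enorm_sub_sq_le_of_four_mul_opNorm_le ht hopNorm hzhat_norm hzhat_dir fun j => ?_
  rw [hfield]
  exact congrFun hz j

theorem stmt17 {n : ℕ} (hn : 1 ≤ n)
    (zstar : Fin n → ℂ) (hzstar : ∀ j, ‖zstar j‖ = 1)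
    (σ : ℝ) (hσ : 0 < σ) (W : Matrix (Fin n) (Fin n) ℂ) (hW : W.IsHermitian)
    (Y : Matrix (Fin n) (Fin n) ℂ)
    (hY : Y = Matrix.vecMulVec zstar (star zstar) + (σ : ℂ) • W)
    (zhat : Fin n → ℂ) (hzhat1 : ∀ j, ‖zhat j‖ = 1) (hzhat2 : zhat = F1 Y zhat)
    (t : ℝ) (ht : 0 < t) (ht2 : 4 * σ * opNorm W ≤ t)
    (z : Fin n → ℂ) (hz1 : ∀ i, ‖z i‖ ≤ 1)
    (hz2 : z = G zstar σ W z (dotProduct (star zstar) zhat) t) :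
    enorm (zhat - z) ^ 2 ≤
      32 * ∑ j : Fin n, ind (‖zstar j * dotProduct (star zstar) zhat +
        (σ : ℂ) * W.mulVec z j‖ < t) := by
  exact (stmt17_general zstar σ W Y hY zhat (fun j => (hzhat1 j).le) hzhat2 t ht
    (by rwa [abs_of_pos hσ]) z hz2).trans
    (mul_le_mul_of_nonneg_right (by norm_num) (Finset.sum_nonneg fun _ _ => ind_nonneg _))

end PhaseSync
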